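/- For any two functions f, g : {0,1,…,n} → {1,…,n}, one has ⟨ψ_f, ψ_g⟩ = 0 if and only if |Δ_{f,g}| = 1, where Δ_{f,g} = {x : f(x) = g(x)}; moreover ⟨ψ_f, ψ_f⟩ = 1, i.e. each ψ_f is a unit vector. -/

import Mathlib

open scoped ComplexInnerProductSpace ComplexConjugate BigOperators

/-- The tensor product `x ⊗ conj x'` of a vector with the componentwise conjugate of
another vector, viewed as a vector of `ℂ^n ⊗ ℂ^n ≅ ℂ^{n²}`. -/
noncomputable def tensConj {n : ℕ} (x x' : EuclideanSpace ℂ (Fin n)) :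
    EuclideanSpace ℂ (Fin n × Fin n) :=
  WithLp.toLp 2 fun p => x p.1 * conj (x' p.2)
/-- The state `φ = (1/√n) Σ_b v_b ⊗ conj v_b` built from a basis `v`. -/
noncomputable def meState {n : ℕ} (v : Fin n → EuclideanSpace ℂ (Fin n)) :
    EuclideanSpace ℂ (Fin n × Fin n) :=
  ((Real.sqrt n : ℂ))⁻¹ • ∑ b : Fin n, tensConj (v b) (v b)

/-- The state `ψ_f = -φ + γ_f` where `φ = (1/√n) Σ_b v_{0,b} ⊗ conj v_{0,b}` and
`γ_f = (1/√n) Σ_a v_{a,f(a)} ⊗ conj v_{a,f(a)}`. -/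
noncomputable def psiState {n : ℕ} (v : Fin (n + 1) → Fin n → EuclideanSpace ℂ (Fin n))
    (f : Fin (n + 1) → Fin n) : EuclideanSpace ℂ (Fin n × Fin n) :=
  -meState (v 0) +
    ((Real.sqrt n : ℂ))⁻¹ • ∑ a : Fin (n + 1), tensConj (v a (f a)) (v a (f a))

theorem aux_inner_tens {n : ℕ} (x y : EuclideanSpace ℂ (Fin n)) :
    ⟪tensConj x x, tensConj y y⟫ = ((‖⟪x, y⟫‖ ^ 2 : ℝ) : ℂ) := by
  have h : ((‖⟪x, y⟫‖ ^ 2 : ℝ) : ℂ) = ⟪x, y⟫ * conj ⟪x, y⟫ := by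
    rw [Complex.mul_conj, Complex.normSq_eq_norm_sq]
  rw [h]
  simp only [PiLp.inner_apply, tensConj, map_sum, Finset.sum_mul_sum, Fintype.sum_prod_type]
  refine Finset.sum_congr rfl fun i _ => Finset.sum_congr rfl fun j _ => ?_
  simp
  ring

theorem aux_inner_psi (n : ℕ) (hn : 1 ≤ n)
    (v : Fin (n + 1) → Fin n → EuclideanSpace ℂ (Fin n))
    (horth : ∀ a, Orthonormal ℂ (v a))
    (hmub : ∀ a a', a ≠ a' → ∀ b b', ‖⟪v a b, v a' b'⟫‖ ^ 2 = 1 / n)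
    (f g : Fin (n + 1) → Fin n) :
    ⟪psiState v f, psiState v g⟫ =
      (((Finset.univ.filter fun x => f x = g x).card : ℂ) - 1) / n := by
  have hn0 : (n : ℂ) ≠ 0 := by
    have : n ≠ 0 := by omega
    exact_mod_cast this
  have hs : ((Real.sqrt n : ℂ))⁻¹ * ((Real.sqrt n : ℂ))⁻¹ = (n : ℂ)⁻¹ := by
    rw [← mul_inv]
    congr 1
    have := Real.mul_self_sqrt (Nat.cast_nonneg (α := ℝ) n)
    exact_mod_cast this
  have hsame : ∀ a b b', ⟪tensConj (v a b) (v a b), tensConj (v a b') (v a b')⟫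
      = if b = b' then (1 : ℂ) else 0 := by
    intro a b b'
    rw [aux_inner_tens, orthonormal_iff_ite.mp (horth a)]
    split_ifs <;> simp
  have hdiff : ∀ a a', a ≠ a' → ∀ b b',
      ⟪tensConj (v a b) (v a b), tensConj (v a' b') (v a' b')⟫ = (n : ℂ)⁻¹ := by
    intro a a' h b b'
    rw [aux_inner_tens, hmub a a' h]
    simp
  have hgen : ∀ a a' b b',
      ⟪tensConj (v a b) (v a b), tensConj (v a' b') (v a' b')⟫ =
        (n : ℂ)⁻¹ + if a = a' then ((if b = b' then (1 : ℂ) else 0) - (n : ℂ)⁻¹) else 0 := by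
    intro a a' b b'
    by_cases h : a = a'
    · subst h
      rw [hsame]; simp
    · rw [hdiff a a' h]; simp [h]
  have h1 : ⟪∑ b, tensConj (v 0 b) (v 0 b), ∑ b, tensConj (v 0 b) (v 0 b)⟫ = (n : ℂ) := by
    simp only [sum_inner, inner_sum, hsame]
    simp
  have h2 : ∀ g : Fin (n + 1) → Fin n, ⟪∑ b, tensConj (v 0 b) (v 0 b),
      ∑ a, tensConj (v a (g a)) (v a (g a))⟫ = (n : ℂ) + 1 := by
    intro g
    have : ∀ a, ∑ b, ⟪tensConj (v 0 b) (v 0 b), tensConj (v a (g a)) (v a (g a))⟫ = (1 : ℂ) := by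
      intro a
      by_cases h : 0 = a
      · subst h
        simp only [hsame]; simp
      · simp only [hdiff 0 a h]; simp [hn0]
    simp only [inner_sum, sum_inner, this]
    simp
  have h3 : ⟪∑ a, tensConj (v a (f a)) (v a (f a)), ∑ b, tensConj (v 0 b) (v 0 b)⟫
      = (n : ℂ) + 1 := by
    rw [← inner_conj_symm, h2]; simp
  have h4 : ⟪∑ a, tensConj (v a (f a)) (v a (f a)), ∑ a, tensConj (v a (g a)) (v a (g a))⟫
      = ((Finset.univ.filter fun x => f x = g x).card : ℂ) + n + 1 := by
    simp only [inner_sum, sum_inner, hgen, Finset.sum_add_distrib, Finset.sum_ite_eq,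
      Finset.sum_ite_eq', Finset.mem_univ, if_true, Finset.sum_sub_distrib, Finset.sum_boole,
      Finset.sum_const, Finset.card_univ, Fintype.card_fin, nsmul_eq_mul]
    push_cast
    field_simp
    ring
  have hc : (starRingEnd ℂ) ((Real.sqrt n : ℂ))⁻¹ = ((Real.sqrt n : ℂ))⁻¹ := by
    rw [map_inv₀, Complex.conj_ofReal]
  simp only [psiState, meState, inner_add_left, inner_add_right, inner_neg_left, inner_neg_right,
    inner_smul_left, inner_smul_right, h1, h2, h3, h4, hc]
  rw [div_eq_mul_inv]
  linear_combination
    (((Finset.univ.filter fun x => f x = g x).card : ℂ) - 1) * hs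

/-- `⟨ψ_f, ψ_g⟩ = 0` if and only if the collision set `Δ_{f,g} = {x : f x = g x}`
has exactly one element; moreover `⟨ψ_f, ψ_f⟩ = 1`, i.e. each `ψ_f` is a unit vector. -/
theorem inner_psiState_eq_zero_iff
    (n : ℕ) (hn : 1 ≤ n)
    (v : Fin (n + 1) → Fin n → EuclideanSpace ℂ (Fin n))
    (horth : ∀ a, Orthonormal ℂ (v a))
    (hmub : ∀ a a', a ≠ a' → ∀ b b', ‖⟪v a b, v a' b'⟫‖ ^ 2 = 1 / n)
    (f g : Fin (n + 1) → Fin n) :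
    (⟪psiState v f, psiState v g⟫ = 0 ↔
      (Finset.univ.filter fun x => f x = g x).card = 1) ∧
    ⟪psiState v f, psiState v f⟫ = 1 := by
  have hn0 : (n : ℂ) ≠ 0 := by
    have : n ≠ 0 := by omega
    exact_mod_cast this
  rw [aux_inner_psi n hn v horth hmub, aux_inner_psi n hn v horth hmub]
  constructor
  · rw [div_eq_zero_iff, or_iff_left hn0, sub_eq_zero]
    exact_mod_cast Iff.rfl
  · simp [hn0]
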